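/- arXiv:2310.13285 — 3 statements merged into one kernel-verified Lean document; each statement's English description precedes it below -/
import Mathlib

section
/- Let δ, μ ∈ ℝ. Let χ : ℝ → ℝ be a continuously differentiable function with 0 ≤ χ ≤ 1, χ(s) = 0 for s ∈ [−1, 0] and χ(s) = 1 for s ≤ −2. Let u : (−∞, 0) → ℝ be continuously differentiable and v : (−∞, 0) → ℝ continuous, satisfying u′(s) + μ·u(s) = v(s) for all s < 0, and assume ∫_{−∞}^0 u(s)² e^{−2δs} ds < ∞ and ∫_{−∞}^0 v(s)² e^{−2δs} ds < ∞. Then (μ + δ) · ∫_{−∞}^0 (χ(s)u(s))² e^{−2δs} ds = ∫_{−∞}^0 χ(s)² u(s) v(s) e^{−2δs} ds + (1/2) ∫_{−∞}^0 (χ²)′(s) u(s)² e^{−2δs} ds. -/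
/-!
The identity is the fundamental theorem of calculus for `F = (χ u)² e^{-2δs}` on `(-∞, -1]`. By the
equation `u' = v - μ u`,
`F' = (χ²)' u² e^{-2δs} + 2 χ² u v e^{-2δs} - 2 (μ + δ) (χ u)² e^{-2δs}`,
so it suffices that `∫ F' = 0`. At the right end `F (-1) = 0` because `χ (-1) = 0`. On the left, `F`
and the three terms of `F'` are integrable, being dominated by multiples of `u² e^{-2δs}` and
`v² e^{-2δs}` (here `(χ²)'` is bounded because it vanishes on `(-∞, -2)`), and a function which is
integrable together with its derivative tends to `0` at `-∞`. Finally, all the integrands vanish on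
`(-1, 0)`, so the integrals over `(-∞, 0)` are integrals over `(-∞, -1]`.
-/

open MeasureTheory Real

/-- Integration-by-parts identity for the weighted ODE mode near the conical point. -/
theorem conical_mode_integration_by_parts
    (δ μ : ℝ) (χ u v u' : ℝ → ℝ)
    (hχ : ContDiff ℝ 1 χ)
    (hχ0 : ∀ s, 0 ≤ χ s) (hχ1 : ∀ s, χ s ≤ 1)
    (hχvanish : ∀ s ∈ Set.Icc (-1 : ℝ) 0, χ s = 0)
    (hχone : ∀ s ≤ (-2 : ℝ), χ s = 1)
    (hderiv : ∀ s < (0 : ℝ), HasDerivAt u (u' s) s)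
    (hu'cont : ContinuousOn u' (Set.Iio 0))
    (hvcont : ContinuousOn v (Set.Iio 0))
    (hode : ∀ s < (0 : ℝ), u' s + μ * u s = v s)
    (hu_int : IntegrableOn (fun s => (u s) ^ 2 * Real.exp (-2 * δ * s)) (Set.Iio 0))
    (hv_int : IntegrableOn (fun s => (v s) ^ 2 * Real.exp (-2 * δ * s)) (Set.Iio 0)) :
    (μ + δ) * ∫ s in Set.Iio (0 : ℝ), (χ s * u s) ^ 2 * Real.exp (-2 * δ * s)
      = (∫ s in Set.Iio (0 : ℝ), (χ s) ^ 2 * u s * v s * Real.exp (-2 * δ * s))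
        + (1 / 2) * ∫ s in Set.Iio (0 : ℝ),
            deriv (fun t => (χ t) ^ 2) s * (u s) ^ 2 * Real.exp (-2 * δ * s) := by
  have hw : Continuous fun s : ℝ => Real.exp (-2 * δ * s) := by fun_prop
  have hsub : Set.Iic (-1 : ℝ) ⊆ Set.Iio 0 := fun s hs => by
    simp only [Set.mem_Iic, Set.mem_Iio] at *; linarith
  have hu : ContinuousOn u (Set.Iic (-1)) := fun s hs =>
    (hderiv s (hsub hs)).continuousAt.continuousWithinAt
  have hv : ContinuousOn v (Set.Iic (-1)) := hvcont.mono hsub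
  have hχc : Continuous χ := hχ.continuous
  have hχ2 : ContDiff ℝ 1 fun t => (χ t) ^ 2 := hχ.pow 2
  have hD : Continuous (deriv fun t => (χ t) ^ 2) := hχ2.continuous_deriv le_rfl
  have hD0 : ∀ s ∈ Set.Ioo (-1 : ℝ) 0, deriv (fun t => (χ t) ^ 2) s = 0 := by
    intro s hs
    have : (fun t => (χ t) ^ 2) =ᶠ[nhds s] fun _ => (0 : ℝ) := by
      filter_upwards [Ioo_mem_nhds hs.1 hs.2] with t ht
      simp [hχvanish t ⟨ht.1.le, ht.2.le⟩]
    rw [this.deriv_eq, deriv_const]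
  have hD1 : ∀ s < (-2 : ℝ), deriv (fun t => (χ t) ^ 2) s = 0 := by
    intro s hs
    have : (fun t => (χ t) ^ 2) =ᶠ[nhds s] fun _ => (1 : ℝ) := by
      filter_upwards [Iio_mem_nhds hs] with t ht
      simp [hχone t (le_of_lt ht)]
    rw [this.deriv_eq, deriv_const]
  obtain ⟨C, hC⟩ := (isCompact_Icc (a := (-2 : ℝ)) (b := -1)).exists_bound_of_continuousOn
    hD.continuousOn
  have hC0 : 0 ≤ C := (norm_nonneg _).trans (hC (-1) (by norm_num))
  have hDb : ∀ s ∈ Set.Iic (-1 : ℝ), |deriv (fun t => (χ t) ^ 2) s| ≤ C := by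
    intro s hs
    rcases lt_or_ge s (-2) with h | h
    · rw [hD1 s h]; simpa using hC0
    · exact hC s ⟨h, hs⟩
  have hχsq : ∀ s, (χ s) ^ 2 ≤ 1 := fun s => pow_le_one₀ (hχ0 s) (hχ1 s)
  have hui := hu_int.mono_set hsub
  have hvi := hv_int.mono_set hsub
  have hA : IntegrableOn (fun s => (χ s * u s) ^ 2 * Real.exp (-2 * δ * s)) (Set.Iic (-1)) := by
    refine hui.mono' (ContinuousOn.aestronglyMeasurable (by fun_prop) measurableSet_Iic)
      (Filter.Eventually.of_forall fun s => ?_)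
    rw [Real.norm_of_nonneg (by positivity), mul_pow]
    gcongr
    exact mul_le_of_le_one_left (sq_nonneg _) (hχsq s)
  have hB : IntegrableOn (fun s => (χ s) ^ 2 * u s * v s * Real.exp (-2 * δ * s))
      (Set.Iic (-1)) := by
    refine (hui.add hvi).mono'
      (ContinuousOn.aestronglyMeasurable (by fun_prop) measurableSet_Iic)
      (Filter.Eventually.of_forall fun s => ?_)
    have h1 : |u s * v s| ≤ u s ^ 2 + v s ^ 2 := by
      rw [abs_le]; constructor <;> nlinarith [sq_nonneg (u s + v s), sq_nonneg (u s - v s)]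
    have h2 : (χ s) ^ 2 * |u s * v s| ≤ u s ^ 2 + v s ^ 2 :=
      (mul_le_of_le_one_left (abs_nonneg _) (hχsq s)).trans h1
    simp only [Pi.add_apply]
    rw [mul_assoc ((χ s) ^ 2), Real.norm_eq_abs, abs_mul, abs_mul, abs_of_nonneg (sq_nonneg (χ s)),
      Real.abs_exp, ← add_mul]
    gcongr
  have hE : IntegrableOn
      (fun s => deriv (fun t => (χ t) ^ 2) s * (u s) ^ 2 * Real.exp (-2 * δ * s))
      (Set.Iic (-1)) := by
    refine (hui.const_mul C).mono'
      (ContinuousOn.aestronglyMeasurable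
        ((hD.continuousOn.mul (hu.pow 2)).mul hw.continuousOn) measurableSet_Iic)
      (ae_restrict_of_forall_mem measurableSet_Iic fun s hs => ?_)
    rw [mul_assoc, norm_mul, Real.norm_eq_abs,
      Real.norm_of_nonneg (by positivity : 0 ≤ u s ^ 2 * Real.exp (-2 * δ * s))]
    gcongr
    exact hDb s hs
  have hF' : ∀ s ∈ Set.Iic (-1 : ℝ),
      HasDerivAt (fun s => (χ s * u s) ^ 2 * Real.exp (-2 * δ * s))
        (deriv (fun t => (χ t) ^ 2) s * (u s) ^ 2 * Real.exp (-2 * δ * s)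
          + 2 * ((χ s) ^ 2 * u s * v s * Real.exp (-2 * δ * s))
          - 2 * (μ + δ) * ((χ s * u s) ^ 2 * Real.exp (-2 * δ * s))) s := by
    intro s hs
    have d1 : HasDerivAt (fun t => (χ t) ^ 2) (deriv (fun t => (χ t) ^ 2) s) s :=
      (hχ2.differentiable one_ne_zero s).hasDerivAt
    have d2 := (hderiv s (hsub hs)).pow 2
    have d3 : HasDerivAt (fun s : ℝ => Real.exp (-2 * δ * s))
        (Real.exp (-2 * δ * s) * (-2 * δ)) s := by
      simpa using ((hasDerivAt_id s).const_mul (-2 * δ)).exp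
    have d := (d1.mul d2).mul d3
    simp only [mul_pow]
    refine HasDerivAt.congr_deriv (f := fun s => χ s ^ 2 * u s ^ 2 * Real.exp (-2 * δ * s)) d ?_
    rw [← hode s (hsub hs)]
    simp only [Pi.mul_apply, Pi.pow_apply]
    push_cast
    ring
  have hEB : IntegrableOn
      (fun s => deriv (fun t => (χ t) ^ 2) s * (u s) ^ 2 * Real.exp (-2 * δ * s)
        + 2 * ((χ s) ^ 2 * u s * v s * Real.exp (-2 * δ * s))) (Set.Iic (-1)) :=
    hE.add (hB.const_mul 2)
  have hint := hEB.sub (hA.const_mul (2 * (μ + δ)))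
  have hlim := tendsto_zero_of_hasDerivAt_of_integrableOn_Iic hF' hint hA
  have hFTC := integral_Iic_of_hasDerivAt_of_tendsto' hF' hint hlim
  rw [integral_sub hEB (hA.const_mul _), integral_add hE (hB.const_mul 2),
    integral_const_mul, integral_const_mul, hχvanish (-1) (by norm_num)] at hFTC
  have hdiff : ∀ s ∈ Set.Iio (0 : ℝ) \ Set.Iic (-1), s ∈ Set.Ioo (-1 : ℝ) 0 := fun s hs =>
    ⟨not_le.mp hs.2, hs.1⟩
  have hχd : ∀ s ∈ Set.Iio (0 : ℝ) \ Set.Iic (-1), χ s = 0 := fun s hs =>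
    hχvanish s (Set.Ioo_subset_Icc_self (hdiff s hs))
  rw [setIntegral_eq_of_subset_of_forall_sdiff_eq_zero measurableSet_Iio hsub
      (fun s hs => by simp [hχd s hs]),
    setIntegral_eq_of_subset_of_forall_sdiff_eq_zero measurableSet_Iio hsub
      (f := fun s => (χ s) ^ 2 * u s * v s * Real.exp (-2 * δ * s))
      (fun s hs => by simp [hχd s hs]),
    setIntegral_eq_of_subset_of_forall_sdiff_eq_zero measurableSet_Iio hsub
      (f := fun s => deriv (fun t => (χ t) ^ 2) s * (u s) ^ 2 * Real.exp (-2 * δ * s))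
      (fun s hs => by simp only [hD0 s (hdiff s hs), zero_mul])]
  linarith
end

section
/- Let μ, δ, δ′ ∈ ℝ with δ < δ′, δ ≠ −μ and δ′ ≠ −μ, and let 0 < R ≤ 1. Let u : (0, R) → ℝ be continuously differentiable and v : (0, R) → ℝ continuous, with u′(r) + (μ/r)·u(r) = v(r) for all r ∈ (0, R), ∫_0^R u(r)² r^{−2δ−1} dr < ∞ and ∫_0^R v(r)² r^{−2δ′+1} dr < ∞. Then there exists c ∈ ℝ such that ∫_0^R (u(r) − c·r^{−μ})² r^{−2δ′−1} dr < ∞; moreover, if −μ < δ or −μ > δ′, then one may take c = 0. -/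
/-!
Put `w r = r ^ μ * u r`, `g r = r ^ μ * v r`, `a = μ + δ'`, `b = μ + δ`. The equation becomes
`w' = g`, and the claim is that `(w - c)² r^(-2a-1)` is integrable near `0`, given that
`w² r^(-2b-1)` and `g² r^(1-2a)` are. This is Hardy's inequality for `z = w - c`, proved by
integrating `-(z² r^(-2a) / a)' = 2 z² r^(-2a-1) - (2/a) z g r^(-2a)` over `[s, T]` and absorbing
the cross term (`hardy_integrableOn`). The boundary term `z(s)² s^(-2a) / a` must stay bounded above
as `s → 0`:

* for `a < 0` it is nonpositive, so `c = 0` works;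
* for `a > 0` the weighted bound on `g` makes `w` converge to some `c` at `0`, with
  `|w - c| ≤ C r^a` (`exists_limit_of_weighted_deriv`). If moreover `b > 0`, then integrability of
  `w² r^(-2b-1)` forces `c = 0` (`limit_eq_zero_of_integrableOn`).
-/

open MeasureTheory Real
open Set Filter Topology

/-- Hardy's inequality near `0`, in qualitative form. The hypothesis `hB` controls the boundary term
at `0`; it holds with `B = 0` when `a < 0`. -/
lemma hardy_integrableOn {a T B : ℝ} (ha : a ≠ 0) (hT : 0 < T) {z g : ℝ → ℝ}
    (hz : ∀ r ∈ Ioc 0 T, HasDerivAt z (g r) r) (hg : ContinuousOn g (Ioc 0 T))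
    (hG : IntegrableOn (fun r : ℝ => g r ^ 2 * r ^ (1 - 2 * a)) (Ioc 0 T))
    (hB : ∀ s ∈ Ioc 0 T, z s ^ 2 * s ^ (-2 * a) / a ≤ B) :
    IntegrableOn (fun r : ℝ => z r ^ 2 * r ^ (-2 * a - 1)) (Ioc 0 T) := by
  have hzc : ContinuousOn z (Ioc 0 T) := fun r hr => (hz r hr).continuousAt.continuousWithinAt
  have hpc : ∀ p : ℝ, ContinuousOn (fun r : ℝ => r ^ p) (Ioc 0 T) := fun p r hr =>
    (Real.continuousAt_rpow_const r p (Or.inl hr.1.ne')).continuousWithinAt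
  have hZc : ContinuousOn (fun r : ℝ => z r ^ 2 * r ^ (-2 * a - 1)) (Ioc 0 T) :=
    (hzc.pow 2).mul (hpc _)
  have hsub : ∀ {s : ℝ}, 0 < s → Icc s T ⊆ Ioc 0 T := fun hs r hr => ⟨hs.trans_le hr.1, hr.2⟩
  have hseq : Tendsto (fun n : ℕ => T / ((n : ℝ) + 1)) atTop (𝓝 0) :=
    tendsto_const_div_atTop_nhds_zero_nat T |>.comp (tendsto_add_atTop_nat 1) |>.congr
      (fun n => by simp)
  refine integrableOn_Ioc_of_intervalIntegral_norm_bounded_left (l := atTop)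
    (I := (∫ r in Ioc 0 T, g r ^ 2 * r ^ (1 - 2 * a)) / a ^ 2 + (B - z T ^ 2 * T ^ (-2 * a) / a))
    (fun n : ℕ => ?_) hseq (Eventually.of_forall fun n => ?_)
  · exact ((hZc.mono (hsub (by positivity))).integrableOn_Icc).mono_set Ioc_subset_Icc_self
  · set s : ℝ := T / ((n : ℝ) + 1)
    have hs : 0 < s := by positivity
    have hsT : s ≤ T := div_le_self hT.le (by linarith [n.cast_nonneg (α := ℝ)])
    have hI : ∀ {f : ℝ → ℝ}, ContinuousOn f (Ioc 0 T) → IntervalIntegrable f volume s T :=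
      fun hf => (hf.mono (by rw [uIcc_of_le hsT]; exact hsub hs)).intervalIntegrable
    have hGc : ContinuousOn (fun r : ℝ => g r ^ 2 * r ^ (1 - 2 * a)) (Ioc 0 T) :=
      (hg.pow 2).mul (hpc _)
    have hhc : ContinuousOn (fun r : ℝ => 2 * (z r ^ 2 * r ^ (-2 * a - 1))
        - 2 / a * (z r * g r * r ^ (-2 * a))) (Ioc 0 T) :=
      (hZc.const_mul 2).sub (((hzc.mul hg).mul (hpc _)).const_mul _)
    have hftc := intervalIntegral.integral_eq_sub_of_hasDerivAt (a := s) (b := T)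
      (f := fun r => - (z r ^ 2 * r ^ (-2 * a) / a))
      (f' := fun r : ℝ => 2 * (z r ^ 2 * r ^ (-2 * a - 1)) - 2 / a * (z r * g r * r ^ (-2 * a)))
      (fun r hr => by
        rw [uIcc_of_le hsT] at hr
        have hr' := hsub hs hr
        have h1 := ((((hz r hr').pow 2).mul
          (Real.hasDerivAt_rpow_const (p := -2 * a) (Or.inl hr'.1.ne'))).div_const a).neg
        refine h1.congr_deriv ?_
        simp only [Pi.pow_apply]
        field_simp
        push_cast
        ring) (hI hhc)
    have hmono := intervalIntegral.integral_mono_on hsT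
      ((hI hZc).sub ((hI hGc).div_const (a ^ 2))) (hI hhc) (fun r hr => by
        have hr0 : 0 < r := (hsub hs hr).1
        have e1 : r ^ (-2 * a) = r ^ (-2 * a - 1) * r := by
          rw [← Real.rpow_add_one hr0.ne']; ring_nf
        have e2 : r ^ (1 - 2 * a) = r ^ (-2 * a - 1) * r ^ 2 := by
          rw [← Real.rpow_natCast, ← Real.rpow_add hr0]; norm_num; ring_nf
        -- the difference of the two sides is `r ^ (-2a-1) * (z - g r / a) ^ 2`
        have h0 : 0 ≤ r ^ (-2 * a - 1) * (z r - g r * r / a) ^ 2 := by positivity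
        rw [e1, e2, ← sub_nonneg]
        refine h0.trans_eq ?_
        field_simp
        ring)
    rw [intervalIntegral.integral_sub (hI hZc) ((hI hGc).div_const _),
      intervalIntegral.integral_div, hftc] at hmono
    have hGle : ∫ r in s..T, g r ^ 2 * r ^ (1 - 2 * a) ≤
        ∫ r in Ioc 0 T, g r ^ 2 * r ^ (1 - 2 * a) := by
      rw [intervalIntegral.integral_of_le hsT]
      refine setIntegral_mono_set hG ?_ (Ioc_subset_Ioc_left hs.le).eventuallyLE
      filter_upwards [ae_restrict_mem measurableSet_Ioc] with r hr
      have := hr.1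
      simp only [Pi.zero_apply]
      positivity
    have hGle' := div_le_div_of_nonneg_right hGle (sq_nonneg a)
    have hnorm : ∫ r in Ioc s T, ‖z r ^ 2 * r ^ (-2 * a - 1)‖ =
        ∫ r in s..T, z r ^ 2 * r ^ (-2 * a - 1) := by
      rw [intervalIntegral.integral_of_le hsT]
      refine setIntegral_congr_fun measurableSet_Ioc fun r hr => ?_
      have : 0 < r := hs.trans hr.1
      exact Real.norm_of_nonneg (by positivity)
    have := hB s ⟨hs, hsT⟩
    rw [hnorm]
    linarith

/-- If `z' = g` with `g² r^(1-2a)` integrable at `0` and `a > 0`, then `z` has a limit at `0`,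
approached at rate `r ^ a`. -/
lemma exists_limit_of_weighted_deriv {a T : ℝ} (ha : 0 < a) (hT : 0 < T) {z g : ℝ → ℝ}
    (hz : ∀ r ∈ Ioc 0 T, HasDerivAt z (g r) r) (hg : ContinuousOn g (Ioc 0 T))
    (hG : IntegrableOn (fun r : ℝ => g r ^ 2 * r ^ (1 - 2 * a)) (Ioc 0 T)) :
    ∃ c C : ℝ, Tendsto z (𝓝[>] 0) (𝓝 c) ∧ ∀ t ∈ Ioc 0 T, |z t - c| ≤ C * t ^ a := by
  set I := ∫ r in Ioc 0 T, g r ^ 2 * r ^ (1 - 2 * a)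
  set C := I / 2 + 1 / (4 * a) with hC
  have key : ∀ s t, 0 < s → s ≤ t → t ≤ T → |z t - z s| ≤ C * t ^ a := by
    intro s t hs hst htT
    have ht : 0 < t := hs.trans_le hst
    have hsub : Icc s t ⊆ Ioc 0 T := fun r hr => ⟨hs.trans_le hr.1, hr.2.trans htT⟩
    have hI : ∀ {f : ℝ → ℝ}, ContinuousOn f (Ioc 0 T) → IntervalIntegrable f volume s t :=
      fun hf => (hf.mono (by rw [uIcc_of_le hst]; exact hsub)).intervalIntegrable
    have hpc : ∀ p : ℝ, ContinuousOn (fun r : ℝ => r ^ p) (Ioc 0 T) := fun p r hr =>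
      (Real.continuousAt_rpow_const r p (Or.inl hr.1.ne')).continuousWithinAt
    have hGi := hI ((hg.pow 2).mul (hpc (1 - 2 * a)))
    have hPi := hI (hpc (2 * a - 1))
    have hftc := intervalIntegral.integral_eq_sub_of_hasDerivAt (a := s) (b := t)
      (f := z) (f' := g) (fun r hr => hz r (hsub (by rwa [uIcc_of_le hst] at hr))) (hI hg)
    -- Young's inequality with weight `t ^ a`, in place of Cauchy-Schwarz
    have hmono := intervalIntegral.integral_mono_on hst (hI hg.abs)
      ((hGi.const_mul (t ^ a / 2)).add (hPi.const_mul (1 / (2 * t ^ a)))) (fun r hr => by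
        have hr0 : 0 < r := (hsub hr).1
        have e : r ^ (2 * a - 1) = (r ^ (1 - 2 * a))⁻¹ := by
          rw [← Real.rpow_neg hr0.le]; ring_nf
        have hp : 0 < r ^ (1 - 2 * a) := by positivity
        have hq : 0 < t ^ a := by positivity
        have h0 : 0 ≤ (t ^ a * r ^ (1 - 2 * a) * |g r| - 1) ^ 2
            / (2 * t ^ a * r ^ (1 - 2 * a)) := by positivity
        simp only [Pi.mul_apply, Pi.pow_apply]
        rw [e, ← sub_nonneg, ← sq_abs (g r)]
        refine h0.trans_eq ?_
        field_simp
        ring)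
    rw [intervalIntegral.integral_add (hGi.const_mul _) (hPi.const_mul _),
      intervalIntegral.integral_const_mul, intervalIntegral.integral_const_mul,
      integral_rpow (Or.inl (by linarith))] at hmono
    have hGle : ∫ r in s..t, g r ^ 2 * r ^ (1 - 2 * a) ≤ I := by
      rw [intervalIntegral.integral_of_le hst]
      refine setIntegral_mono_set hG ?_ (Ioc_subset_Ioc hs.le htT).eventuallyLE
      filter_upwards [ae_restrict_mem measurableSet_Ioc] with r hr
      have := hr.1
      simp only [Pi.zero_apply]
      positivity
    have habs : |z t - z s| ≤ ∫ r in s..t, |g r| := by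
      rw [← hftc]; exact intervalIntegral.abs_integral_le_integral_abs hst
    have hq : 0 < t ^ a := by positivity
    have h1 : t ^ a / 2 * ∫ r in s..t, g r ^ 2 * r ^ (1 - 2 * a) ≤ t ^ a / 2 * I :=
      mul_le_mul_of_nonneg_left hGle (by positivity)
    have h2 : 1 / (2 * t ^ a) * ((t ^ (2 * a - 1 + 1) - s ^ (2 * a - 1 + 1)) / (2 * a - 1 + 1))
        ≤ 1 / (4 * a) * t ^ a := by
      have e : t ^ (2 * a) = t ^ a * t ^ a := by rw [← Real.rpow_add ht]; ring_nf
      have hsp : 0 < s ^ (2 * a) := by positivity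
      rw [sub_add_cancel, e, ← sub_nonneg]
      have : 0 ≤ s ^ (2 * a) / (4 * a * t ^ a) := by positivity
      refine this.trans_eq ?_
      field_simp
      ring
    calc |z t - z s| ≤ _ := habs
      _ ≤ _ := hmono
      _ ≤ t ^ a / 2 * I + 1 / (4 * a) * t ^ a := add_le_add h1 h2
      _ = C * t ^ a := by rw [hC]; ring
  have hlim0 : Tendsto (fun t : ℝ => C * t ^ a) (𝓝[>] 0) (𝓝 0) := by
    have h := (Real.continuousAt_rpow_const 0 a (Or.inr ha.le)).tendsto.const_mul C
    rw [Real.zero_rpow ha.ne', mul_zero] at h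
    exact h.mono_left nhdsWithin_le_nhds
  have hcauchy : Cauchy (map z (𝓝[>] 0)) := by
    refine Metric.cauchy_iff.2 ⟨inferInstance, fun ε hε => ?_⟩
    have hev : ∀ᶠ t in 𝓝[>] (0 : ℝ), C * t ^ a < ε / 2 ∧ t ∈ Ioc 0 T :=
      (hlim0.eventually (gt_mem_nhds (by positivity))).and (Ioc_mem_nhdsGT hT)
    obtain ⟨t, ht, htm⟩ := hev.exists
    refine ⟨z '' Ioc 0 t, image_mem_map (Ioc_mem_nhdsGT htm.1), ?_⟩
    rintro _ ⟨x, hx, rfl⟩ _ ⟨y, hy, rfl⟩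
    have h1 := key x t hx.1 hx.2 htm.2
    have h2 := key y t hy.1 hy.2 htm.2
    rw [Real.dist_eq]
    rw [abs_le] at h1 h2
    rw [abs_lt]
    constructor <;> linarith
  obtain ⟨c, hc⟩ := CompleteSpace.complete hcauchy
  have hc' : Tendsto z (𝓝[>] 0) (𝓝 c) := hc
  refine ⟨c, C, hc', fun t ht => ?_⟩
  refine le_of_tendsto (hc'.const_sub (z t)).abs ?_
  filter_upwards [Ioc_mem_nhdsGT ht.1] with s hs using key s t hs.1 hs.2 ht.2

lemma limit_eq_zero_of_integrableOn {b T c : ℝ} (hb : 0 < b) (hT : 0 < T) {z : ℝ → ℝ}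
    (hz : Tendsto z (𝓝[>] 0) (𝓝 c))
    (hZ : IntegrableOn (fun r : ℝ => z r ^ 2 * r ^ (-2 * b - 1)) (Ioo 0 T)) : c = 0 := by
  by_contra hc
  have hc2 : 0 < c ^ 2 := by positivity
  have hev : ∀ᶠ r in 𝓝[>] (0 : ℝ), c ^ 2 / 2 < z r ^ 2 ∧ r < T :=
    ((hz.pow 2).eventually (lt_mem_nhds (by linarith))).and
      (mem_nhdsWithin_of_mem_nhds (Iio_mem_nhds hT))
  obtain ⟨ε, hε, hsub⟩ := mem_nhdsGT_iff_exists_Ioo_subset.1 hev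
  have hε0 : 0 < ε := hε
  have hint : IntegrableOn (fun r : ℝ => r ^ (-2 * b - 1)) (Ioo 0 ε) := by
    refine Integrable.mono' ((hZ.mono_set (s := Ioo 0 ε)
      (fun r hr => ⟨hr.1, (hsub hr).2⟩)).const_mul (2 / c ^ 2)) (by fun_prop) ?_
    filter_upwards [ae_restrict_mem measurableSet_Ioo] with r hr
    have hr0 : 0 < r := hr.1
    have hp : 0 < r ^ (-2 * b - 1) := by positivity
    have h1 : 1 ≤ 2 / c ^ 2 * z r ^ 2 := by
      rw [div_mul_eq_mul_div, le_div_iff₀ hc2]; linarith [(hsub hr).1]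
    rw [Real.norm_of_nonneg hp.le, ← mul_assoc]
    exact le_mul_of_one_le_left hp.le h1
  rw [intervalIntegral.integrableOn_Ioo_rpow_iff hε0] at hint
  linarith



/-- Decay jump property for the mode ODE on the model cone (mode-by-mode
content of Lemma 5.2): a solution in `L²_δ` with source in `L²_{δ'-1}` is an
element of `L²_{δ'}` up to a multiple of the homogeneous solution `r^{-μ}`. -/
theorem mode_ode_decay_jump
    (μ δ δ' R : ℝ) (hδδ' : δ < δ') (hδ : δ ≠ -μ) (hδ' : δ' ≠ -μ)
    (hR0 : 0 < R) (hR1 : R ≤ 1)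
    (u v u' : ℝ → ℝ)
    (hderiv : ∀ r ∈ Set.Ioo (0 : ℝ) R, HasDerivAt u (u' r) r)
    (hu'cont : ContinuousOn u' (Set.Ioo 0 R))
    (hvcont : ContinuousOn v (Set.Ioo 0 R))
    (hode : ∀ r ∈ Set.Ioo (0 : ℝ) R, u' r + (μ / r) * u r = v r)
    (hu_int : IntegrableOn (fun r : ℝ => (u r) ^ 2 * r ^ (-2 * δ - 1 : ℝ)) (Set.Ioo 0 R))
    (hv_int : IntegrableOn (fun r : ℝ => (v r) ^ 2 * r ^ (-2 * δ' + 1 : ℝ)) (Set.Ioo 0 R)) :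
    ∃ c : ℝ,
      IntegrableOn (fun r : ℝ => (u r - c * r ^ (-μ : ℝ)) ^ 2 * r ^ (-2 * δ' - 1 : ℝ))
        (Set.Ioo 0 R) ∧
      ((-μ < δ ∨ δ' < -μ) → c = 0) := by
  set a := μ + δ' with ha_def
  set b := μ + δ with hb_def
  have ha : a ≠ 0 := fun h => hδ' (by linarith)
  set w : ℝ → ℝ := fun r => r ^ μ * u r with hw_def
  set g : ℝ → ℝ := fun r => r ^ μ * v r with hg_def
  have hw : ∀ r ∈ Ioo 0 R, HasDerivAt w (g r) r := by
    intro r hr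
    refine ((Real.hasDerivAt_rpow_const (p := μ) (Or.inl hr.1.ne')).mul
      (hderiv r hr)).congr_deriv ?_
    have hr0 : r ≠ 0 := hr.1.ne'
    simp only [hg_def]
    rw [← hode r hr, Real.rpow_sub_one hr0]
    field_simp
    ring
  have hg : ContinuousOn g (Ioo 0 R) := ContinuousOn.mul (fun r hr =>
    (Real.continuousAt_rpow_const r μ (Or.inl hr.1.ne')).continuousWithinAt) hvcont
  have hwc : ContinuousOn w (Ioo 0 R) := fun r hr => (hw r hr).continuousAt.continuousWithinAt
  have hsq : ∀ r : ℝ, 0 < r → ∀ p : ℝ, (r ^ μ) ^ 2 * r ^ (p - 2 * μ) = r ^ p := by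
    intro r hr p
    rw [← Real.rpow_natCast, ← Real.rpow_mul hr.le, ← Real.rpow_add hr]
    congr 1; push_cast; ring
  have hG : IntegrableOn (fun r : ℝ => g r ^ 2 * r ^ (1 - 2 * a)) (Ioo 0 R) := by
    refine hv_int.congr_fun (fun r hr => ?_) measurableSet_Ioo
    have := hsq r hr.1 (-2 * δ' + 1)
    rw [show -2 * δ' + 1 - 2 * μ = 1 - 2 * a by rw [ha_def]; ring] at this
    simp only [hg_def, ← this]; ring
  have hW : IntegrableOn (fun r : ℝ => w r ^ 2 * r ^ (-2 * b - 1)) (Ioo 0 R) := by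
    refine hu_int.congr_fun (fun r hr => ?_) measurableSet_Ioo
    have := hsq r hr.1 (-2 * δ - 1)
    rw [show -2 * δ - 1 - 2 * μ = -2 * b - 1 by rw [hb_def]; ring] at this
    simp only [hw_def, ← this]; ring
  have hT : 0 < R / 2 := by linarith
  have hTR : Ioc 0 (R / 2) ⊆ Ioo 0 R := fun r hr => ⟨hr.1, by linarith [hr.2]⟩
  -- away from `0` the weights are comparable, so only integrability on `(0, R/2]` matters
  have reduce : ∀ c : ℝ,
      IntegrableOn (fun r : ℝ => (w r - c) ^ 2 * r ^ (-2 * a - 1)) (Ioc 0 (R / 2)) →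
      IntegrableOn (fun r : ℝ => (u r - c * r ^ (-μ : ℝ)) ^ 2 * r ^ (-2 * δ' - 1 : ℝ))
        (Ioo 0 R) := by
    intro c hc
    have hfar : IntegrableOn (fun r : ℝ => (w r - c) ^ 2 * r ^ (-2 * a - 1)) (Ioo (R / 2) R) := by
      have hsub : Ioo (R / 2) R ⊆ Ioo 0 R := Ioo_subset_Ioo_left hT.le
      have hpc : ContinuousOn (fun r : ℝ => r ^ (-2 * a - 1)) (Icc (R / 2) R) := fun r hr =>
        (Real.continuousAt_rpow_const r _ (Or.inl (hT.trans_le hr.1).ne')).continuousWithinAt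
      have hdom := ((hW.mono_set hsub).const_mul (2 * (R / 2) ^ (2 * b - 2 * a))).add
        ((hpc.integrableOn_Icc.mono_set Ioo_subset_Icc_self).const_mul (2 * c ^ 2))
      refine Integrable.mono' hdom ((((hwc.mono hsub).sub continuousOn_const).pow 2).mul
        (hpc.mono Ioo_subset_Icc_self) |>.aestronglyMeasurable measurableSet_Ioo) ?_
      filter_upwards [ae_restrict_mem measurableSet_Ioo] with r hr
      have hr0 : 0 < r := (hsub hr).1
      have e : r ^ (-2 * a - 1) = r ^ (2 * b - 2 * a) * r ^ (-2 * b - 1) := by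
        rw [← Real.rpow_add hr0]; congr 1; ring
      have hle : r ^ (2 * b - 2 * a) ≤ (R / 2) ^ (2 * b - 2 * a) :=
        Real.rpow_le_rpow_of_nonpos hT hr.1.le (by rw [ha_def, hb_def]; linarith)
      have hp : 0 < r ^ (-2 * b - 1) := by positivity
      have hp' : 0 < r ^ (-2 * a - 1) := by positivity
      have h1 : r ^ (-2 * a - 1) * w r ^ 2 ≤
          (R / 2) ^ (2 * b - 2 * a) * r ^ (-2 * b - 1) * w r ^ 2 := by
        rw [e]; gcongr
      have h2 : (w r - c) ^ 2 * r ^ (-2 * a - 1) ≤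
          (2 * w r ^ 2 + 2 * c ^ 2) * r ^ (-2 * a - 1) := by
        gcongr; nlinarith [sq_nonneg (w r + c)]
      rw [Real.norm_of_nonneg (by positivity)]
      simp only [Pi.add_apply]
      nlinarith
    have hall := hc.union hfar
    rw [Ioc_union_Ioo_eq_Ioo hT.le (by linarith)] at hall
    refine hall.congr_fun (fun r hr => ?_) measurableSet_Ioo
    have h := hsq r hr.1 (-2 * δ' - 1)
    rw [show -2 * δ' - 1 - 2 * μ = -2 * a - 1 by rw [ha_def]; ring] at h
    have h1 : r ^ μ * r ^ (-μ) = 1 := by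
      rw [← Real.rpow_add hr.1]; simp
    have h2 : w r - c = r ^ μ * (u r - c * r ^ (-μ)) := by
      simp only [hw_def]; linear_combination c * h1
    simp only [h2, ← h]; ring
  have hwT : ∀ c, ∀ r ∈ Ioc 0 (R / 2), HasDerivAt (fun r => w r - c) (g r) r :=
    fun c r hr => (hw r (hTR hr)).sub_const c
  have hgT := hg.mono hTR
  have hGT := hG.mono_set hTR
  rcases lt_or_gt_of_ne ha with hneg | hpos
  · refine ⟨0, reduce 0 (hardy_integrableOn (B := 0) ha hT (hwT 0) hgT hGT fun s hs => ?_),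
      fun _ => rfl⟩
    have := hs.1
    exact div_nonpos_of_nonneg_of_nonpos (by positivity) hneg.le
  · obtain ⟨c, C, hlim, hC⟩ := exists_limit_of_weighted_deriv hpos hT
      (fun r hr => hw r (hTR hr)) hgT hGT
    refine ⟨c, reduce c (hardy_integrableOn (B := C ^ 2 / a) ha hT (hwT c) hgT hGT fun s hs => ?_),
      fun h => ?_⟩
    · have hs0 := hs.1
      have h1 : (w s - c) ^ 2 ≤ (C * s ^ a) ^ 2 := by
        rw [← sq_abs]; exact pow_le_pow_left₀ (abs_nonneg _) (hC s hs) 2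
      have h2 : (s ^ a) ^ 2 * s ^ (-2 * a) = 1 := by
        rw [← Real.rpow_natCast, ← Real.rpow_mul hs0.le, ← Real.rpow_add hs0]
        norm_num; ring_nf; simp
      gcongr
      calc (w s - c) ^ 2 * s ^ (-2 * a) ≤ (C * s ^ a) ^ 2 * s ^ (-2 * a) := by gcongr
        _ = C ^ 2 := by linear_combination C ^ 2 * h2
    · have hb : 0 < b := by rcases h with h | h <;> linarith
      exact limit_eq_zero_of_integrableOn hb hR0 hlim hW
end

section
/- Let m > 0 and define σ(r) := ∫_{2m}^{r} (1 − 2m/s)² ds for r > 2m, and set c := 3^{4/3}·(2m)^{2/3}. Then there exist constants C > 0 and ε > 0 such that for all r ∈ (2m, 2m + ε): σ(r) > 0 and |(1 − 2m/r)⁴·r² − c·σ(r)^{4/3}| ≤ C·σ(r)². -/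
/-!
With `a = 2m` and `y = (r - a)/a`, the geometric expansion
`t²(1 - 2t) ≤ (t/(1+t))² ≤ t²(1 - 2t + 3t²)` integrates to `σ = (a y³/3) q`, where
`1 - 3y/2 ≤ q ≤ 1 - 3y/2 + 9y²/5` (`arclength_bounds`).
The angular coefficient is `A = a² y⁴ h` with `h = (1+y)⁻²`, and
`c σ^{4/3} = a² y⁴ P` with `P = q^{4/3}`.

The error `O(σ²) = O(y⁶)` requires `P - h = O(y²)`, so the terms of order `y` must cancel. They do:
`P³ = q⁴` and `h³ = (1+y)⁻⁶` both lie in `[1 - 6y, 1 - 6y + 21y²]` (`pow_four_bounds`,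
`inv_pow_six_bounds`). Factoring `P³ - h³` then removes the cube root (`abs_sub_le_of_cube`).
-/

open Real intervalIntegral

/-- The radial arclength coordinate `σ(r) = ∫_{2m}^r (1 - 2m/s)² ds` of the
negative mass Schwarzschild metric. -/
noncomputable def schwarzschildArclength (m r : ℝ) : ℝ :=
  ∫ s in (2 * m)..r, (1 - 2 * m / s) ^ 2

private lemma integrand_bounds {t : ℝ} (ht : 0 ≤ t) :
    t ^ 2 * (1 - 2 * t) ≤ (t / (1 + t)) ^ 2 ∧
      (t / (1 + t)) ^ 2 ≤ t ^ 2 * (1 - 2 * t + 3 * t ^ 2) := by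
  have h1 : 0 < (1 + t) ^ 2 := by positivity
  rw [div_pow]
  constructor
  · rw [le_div_iff₀ h1]
    have : 0 ≤ t ^ 2 * (3 * t ^ 2 + 2 * t ^ 3) := by positivity
    nlinarith
  · rw [div_le_iff₀ h1]
    have : 0 ≤ t ^ 2 * (4 * t ^ 3 + 3 * t ^ 4) := by positivity
    nlinarith

/-- An antiderivative computation covering both comparison integrands (`k = 0` and `k = 3`). -/
private lemma integral_comparison {a : ℝ} (ha : 0 < a) (k r : ℝ) :
    ∫ s in a..r, ((s - a) / a) ^ 2 * (1 - 2 * ((s - a) / a) + k * ((s - a) / a) ^ 2) =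
      a * ((r - a) / a) ^ 3 / 3 *
        (1 - 3 / 2 * ((r - a) / a) + 3 * k / 5 * ((r - a) / a) ^ 2) := by
  rw [integral_eq_sub_of_hasDerivAt (f := fun s => a * ((s - a) / a) ^ 3 / 3 *
        (1 - 3 / 2 * ((s - a) / a) + 3 * k / 5 * ((s - a) / a) ^ 2))]
  · simp
  · intro s _
    have h : HasDerivAt (fun s : ℝ => (s - a) / a) (1 / a) s :=
      ((hasDerivAt_id s).sub_const a).div_const a
    have h2 := (((h.pow 3).const_mul a).div_const 3).mul
      (((h.const_mul (3 / 2)).const_sub 1).add ((h.pow 2).const_mul (3 * k / 5)))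
    refine h2.congr_deriv ?_
    simp only [Pi.add_apply, Pi.pow_apply]
    push_cast
    field_simp
    ring
  · apply Continuous.intervalIntegrable
    fun_prop

private lemma arclength_bounds {a r : ℝ} (ha : 0 < a) (hr : a < r) :
    a * ((r - a) / a) ^ 3 / 3 * (1 - 3 / 2 * ((r - a) / a)) ≤
        ∫ s in a..r, (1 - a / s) ^ 2 ∧
      ∫ s in a..r, (1 - a / s) ^ 2 ≤ a * ((r - a) / a) ^ 3 / 3 *
        (1 - 3 / 2 * ((r - a) / a) + 9 / 5 * ((r - a) / a) ^ 2) := by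
  have hint : IntervalIntegrable (fun s : ℝ => (1 - a / s) ^ 2) MeasureTheory.volume a r := by
    apply ContinuousOn.intervalIntegrable
    intro s hs
    rw [Set.uIcc_of_le hr.le] at hs
    have : s ≠ 0 := (ha.trans_le hs.1).ne'
    apply ContinuousAt.continuousWithinAt
    fun_prop (disch := assumption)
  have hpoly : ∀ k : ℝ, IntervalIntegrable (fun s : ℝ => ((s - a) / a) ^ 2 *
      (1 - 2 * ((s - a) / a) + k * ((s - a) / a) ^ 2)) MeasureTheory.volume a r := by
    intro k
    apply Continuous.intervalIntegrable
    fun_prop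
  have key : ∀ s ∈ Set.Icc a r, 0 ≤ (s - a) / a ∧
      (1 - a / s) = ((s - a) / a) / (1 + (s - a) / a) := by
    intro s hs
    have hs0 : 0 < s := ha.trans_le hs.1
    refine ⟨div_nonneg (by linarith [hs.1]) ha.le, ?_⟩
    have : 1 + (s - a) / a = s / a := by field_simp; ring
    rw [this]
    field_simp
  have h0 := integral_comparison ha 0 r
  have h3 := integral_comparison ha 3 r
  constructor
  · have := integral_mono_on hr.le (hpoly 0) hint (fun s hs => by
      obtain ⟨h, e⟩ := key s hs
      rw [e]
      simpa using (integrand_bounds h).1)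
    rw [h0] at this
    simpa using this
  · have := integral_mono_on hr.le hint (hpoly 3) (fun s hs => by
      obtain ⟨h, e⟩ := key s hs
      rw [e]
      exact (integrand_bounds h).2)
    rw [h3] at this
    norm_num at this ⊢
    exact this

private lemma pow_four_bounds {y q : ℝ} (hy : 0 < y) (hy' : y ≤ 1 / 4)
    (h1 : 1 - 3 / 2 * y ≤ q) (h2 : q ≤ 1 - 3 / 2 * y + 9 / 5 * y ^ 2) :
    1 - 6 * y ≤ q ^ 4 ∧ q ^ 4 ≤ 1 - 6 * y + 21 * y ^ 2 := by
  obtain ⟨d, rfl⟩ : ∃ d, q = 1 - d := ⟨1 - q, by ring⟩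
  have hd0 : 0 ≤ d := by nlinarith
  have hd1 : d ≤ 3 / 2 * y := by linarith
  have hd2 : d ^ 2 ≤ 9 / 4 * y ^ 2 := by nlinarith
  constructor
  · nlinarith [sq_nonneg (d * (2 - d)), sq_nonneg d]
  · have : 0 ≤ d ^ 3 * (4 - d) := mul_nonneg (by positivity) (by linarith)
    nlinarith

private lemma inv_pow_six_bounds {y : ℝ} (hy : 0 < y) :
    1 - 6 * y ≤ (((1 + y) ^ 2)⁻¹) ^ 3 ∧ (((1 + y) ^ 2)⁻¹) ^ 3 ≤ 1 - 6 * y + 21 * y ^ 2 := by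
  have hp : 0 < ((1 + y) ^ 2) ^ 3 := by positivity
  rw [inv_pow, ← one_div]
  constructor
  · rw [le_div_iff₀ hp]
    have : 0 ≤ 21 * y ^ 2 + 70 * y ^ 3 + 105 * y ^ 4 + 84 * y ^ 5 + 35 * y ^ 6 + 6 * y ^ 7 := by
      positivity
    linarith [show (1 - 6 * y) * ((1 + y) ^ 2) ^ 3 = 1 - (21 * y ^ 2 + 70 * y ^ 3 + 105 * y ^ 4
      + 84 * y ^ 5 + 35 * y ^ 6 + 6 * y ^ 7) by ring]
  · rw [div_le_iff₀ hp]
    have : 0 ≤ 56 * y ^ 3 + 210 * y ^ 4 + 336 * y ^ 5 + 280 * y ^ 6 + 120 * y ^ 7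
      + 21 * y ^ 8 := by positivity
    linarith [show (1 - 6 * y + 21 * y ^ 2) * ((1 + y) ^ 2) ^ 3 = 1 + (56 * y ^ 3 + 210 * y ^ 4
      + 336 * y ^ 5 + 280 * y ^ 6 + 120 * y ^ 7 + 21 * y ^ 8) by ring]

/-- Cubes that are `δ`-close have `16δ`-close bases once one base is at least `1/4`, because
`|P³ - h³| = |P - h| (P² + P h + h²) ≥ |P - h| h²`. -/
private lemma abs_sub_le_of_cube {P h δ : ℝ} (hP : 0 ≤ P) (hh : 1 / 4 ≤ h)
    (H : |P ^ 3 - h ^ 3| ≤ δ) : |h - P| ≤ 16 * δ := by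
  have e : P ^ 3 - h ^ 3 = (P - h) * (P ^ 2 + P * h + h ^ 2) := by ring
  have hq : 1 / 16 ≤ P ^ 2 + P * h + h ^ 2 := by nlinarith [mul_nonneg hP (by linarith : 0 ≤ h)]
  rw [e, abs_mul, abs_of_pos (by linarith : 0 < P ^ 2 + P * h + h ^ 2)] at H
  rw [abs_sub_comm]
  nlinarith [abs_nonneg (P - h)]

/-- The scaling `c σ^{4/3} = a² y⁴ q^{4/3}` for `σ = (a y³/3) q`. -/
private lemma rpow_scaling {a y q : ℝ} (ha : 0 < a) (hy : 0 < y) (hq : 0 < q) :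
    (3 : ℝ) ^ ((4 : ℝ) / 3) * a ^ ((2 : ℝ) / 3) * (a * y ^ 3 / 3 * q) ^ ((4 : ℝ) / 3) =
      a ^ 2 * y ^ 4 * q ^ ((4 : ℝ) / 3) := by
  rw [mul_rpow (by positivity) hq.le, div_rpow (by positivity) (by norm_num),
    mul_rpow ha.le (by positivity)]
  have h1 : (y ^ 3) ^ ((4 : ℝ) / 3) = y ^ 4 := by
    rw [← rpow_natCast y 3, ← rpow_mul hy.le, ← rpow_natCast y 4]
    norm_num
  have h2 : a ^ ((2 : ℝ) / 3) * a ^ ((4 : ℝ) / 3) = a ^ 2 := by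
    rw [← rpow_add ha, ← rpow_natCast a 2]
    norm_num
  have h3 : (3 : ℝ) ^ ((4 : ℝ) / 3) ≠ 0 := by positivity
  rw [h1, ← h2]
  field_simp

/-- Near `r = 2m`, the angular coefficient `(1 - 2m/r)⁴ r²` of the negative mass
Schwarzschild metric equals `c·σ^{4/3}(1 + O(σ^{2/3}))` with
`c = 3^{4/3}(2m)^{2/3}`: the metric has an `r^{2/3}`-horn singularity. -/
theorem negative_mass_schwarzschild_horn (m : ℝ) (hm : 0 < m) :
    ∃ C > (0 : ℝ), ∃ ε > (0 : ℝ), ∀ r ∈ Set.Ioo (2 * m) (2 * m + ε),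
      0 < schwarzschildArclength m r ∧
      |(1 - 2 * m / r) ^ 4 * r ^ 2 -
          (3 : ℝ) ^ ((4 : ℝ) / 3) * (2 * m) ^ ((2 : ℝ) / 3) *
            (schwarzschildArclength m r) ^ ((4 : ℝ) / 3)|
        ≤ C * (schwarzschildArclength m r) ^ 2 := by
  -- `ε = a/4` gives `y < 1/4`, hence `q ≥ 5/8`, `h ≥ 1/4` and
  -- `|A - c σ^{4/3}| ≤ 16 · 21 a² y⁶ ≤ 336 (24/5)² σ²`, where `(24/5)² ≤ 25`.
  refine ⟨8400, by norm_num, 2 * m / 4, by positivity, ?_⟩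
  intro r hr
  obtain ⟨hr1, hr2⟩ := hr
  unfold schwarzschildArclength
  set a := 2 * m with ha_def
  have ha : 0 < a := by positivity
  obtain ⟨hl, hu⟩ := arclength_bounds ha hr1
  set σ := ∫ s in a..r, (1 - a / s) ^ 2
  obtain ⟨y, hy_def⟩ : ∃ y, y = (r - a) / a := ⟨_, rfl⟩
  rw [← hy_def] at hl hu
  have hy : 0 < y := hy_def ▸ div_pos (by linarith) ha
  have hy4 : y ≤ 1 / 4 := by
    rw [hy_def, div_le_iff₀ ha]; linarith
  have hr_eq : r = a * (1 + y) := by rw [hy_def]; field_simp; ring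
  have hk : 0 < a * y ^ 3 / 3 := by positivity
  obtain ⟨q, hq⟩ : ∃ q, σ = a * y ^ 3 / 3 * q := ⟨σ / (a * y ^ 3 / 3), by field_simp⟩
  rw [hq] at hl hu ⊢
  have hq1 := le_of_mul_le_mul_left hl hk
  have hq2 := le_of_mul_le_mul_left hu hk
  have hq58 : 5 / 8 ≤ q := by linarith
  have hq0 : 0 < q := by linarith
  refine ⟨by positivity, ?_⟩
  rw [rpow_scaling ha hy hq0]
  have hA : (1 - a / r) ^ 4 * r ^ 2 = a ^ 2 * y ^ 4 * ((1 + y) ^ 2)⁻¹ := by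
    have h1y : 1 + y ≠ 0 := by positivity
    have : 1 - a / r = y / (1 + y) := by rw [hr_eq]; field_simp; ring
    rw [this, hr_eq]
    field_simp
  have hP3 : (q ^ ((4 : ℝ) / 3)) ^ 3 = q ^ 4 := by
    rw [← rpow_natCast _ 3, ← rpow_mul hq0.le, ← rpow_natCast q 4]
    norm_num
  have hh : 1 / 4 ≤ ((1 + y) ^ 2)⁻¹ := by
    rw [← one_div]
    exact one_div_le_one_div_of_le (by positivity) (by nlinarith)
  have hdiff : |(q ^ ((4 : ℝ) / 3)) ^ 3 - (((1 + y) ^ 2)⁻¹) ^ 3| ≤ 21 * y ^ 2 := by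
    obtain ⟨b1, b2⟩ := pow_four_bounds hy hy4 hq1 hq2
    obtain ⟨b3, b4⟩ := inv_pow_six_bounds hy
    rw [hP3, abs_le]
    constructor <;> linarith
  have hfin := abs_sub_le_of_cube (by positivity) hh hdiff
  rw [hA, ← mul_sub, abs_mul, abs_of_pos (by positivity : 0 < a ^ 2 * y ^ 4)]
  calc a ^ 2 * y ^ 4 * |((1 + y) ^ 2)⁻¹ - q ^ ((4 : ℝ) / 3)|
      ≤ a ^ 2 * y ^ 4 * (16 * (21 * y ^ 2)) := by gcongr
    _ = a ^ 2 * y ^ 6 * 336 := by ring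
    _ ≤ a ^ 2 * y ^ 6 * (8400 / 9 * q ^ 2) := by
        gcongr
        nlinarith
    _ = 8400 * (a * y ^ 3 / 3 * q) ^ 2 := by ring
end
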